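/- Under the symmetric power preference distribution with positive power function P, every permutation σ of M ⊔ W and its inverse σ⁻¹ are equally likely to be stable: the Lebesgue measure of the set of (X,Y) for which σ is a stable permutation of the induced preference profile equals the Lebesgue measure of the set of (X,Y) for which σ⁻¹ is a stable permutation. -/

import Mathlib

open MeasureTheory

/-- `w₁ ≻ₘ w₂` in the preference profile induced by the matrix `X` and the power function `P`. -/
def PrefM {N : ℕ} (P X : Fin N × Fin N → ℝ) (m w₁ w₂ : Fin N) : Prop :=
  X (m, w₁) ^ P (m, w₁) < X (m, w₂) ^ P (m, w₂)

/-- `m₁ ≻_w m₂` in the preference profile induced by the matrix `Y` and the power function `P`. -/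
def PrefW {N : ℕ} (P Y : Fin N × Fin N → ℝ) (w m₁ m₂ : Fin N) : Prop :=
  Y (m₁, w) ^ P (m₁, w) < Y (m₂, w) ^ P (m₂, w)

/-- A permutation `σ` of `M ⊔ W` exchanging the two sides is encoded as the pair of
bijections `a : M ≃ W` (with `σ m = a m`) and `b : W ≃ M` (with `σ w = b w`);
then `σ⁻¹ m = b.symm m` and `σ⁻¹ w = a.symm w`.
`σ` is a stable permutation when every person weakly prefers their successor to their
predecessor, and no pair `(m, w)` with `σ m ≠ w` and `σ w ≠ m` satisfies
`w ≻ₘ σ⁻¹ m` and `m ≻_w σ⁻¹ w`. -/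
def IsStablePerm {N : ℕ} (P : Fin N × Fin N → ℝ)
    (XY : (Fin N × Fin N → ℝ) × (Fin N × Fin N → ℝ)) (a b : Fin N ≃ Fin N) : Prop :=
  (∀ m, a m = b.symm m ∨ PrefM P XY.1 m (a m) (b.symm m)) ∧
  (∀ w, b w = a.symm w ∨ PrefW P XY.2 w (b w) (a.symm w)) ∧
  ¬ ∃ m w, a m ≠ w ∧ b w ≠ m ∧ PrefM P XY.1 m w (b.symm m) ∧ PrefW P XY.2 w m (a.symm w)

/-- The uniform probability measure on `([0,1]^{M×W})²`. -/
noncomputable def unifBox (N : ℕ) :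
    Measure ((Fin N × Fin N → ℝ) × (Fin N × Fin N → ℝ)) :=
  (Measure.pi fun _ : Fin N × Fin N => volume.restrict (Set.Icc (0:ℝ) 1)).prod
    (Measure.pi fun _ : Fin N × Fin N => volume.restrict (Set.Icc (0:ℝ) 1))

/-!
If `x` and `y` are independent and uniform on `[0, 1]`, then the larger of the scores `x ^ p` and
`y ^ q` has density `t ^ (1/p + 1/q - 1) / q` on the event `x ^ p < y ^ q`, and the same density
with the factor `1/p` instead of `1/q` on the event `y ^ q < x ^ p`. Stability of `σ` involves the
score that a person gives to their successor only through its being smaller than the score they give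
to their predecessor. Hence exchanging these two scores, person by person, multiplies the
probability of stability by a ratio of two values of `P`, and it turns the event that `σ` is stable
into the event that `σ⁻¹` is stable. Since `w` is the successor of `m` if and only if `m` is the
predecessor of `w`, and vice versa, these ratios multiply to `1`.
-/

open Set
open scoped ENNReal

section Balance

/-- For independent `X ∼ μ` and `Y ∼ ν`, the law of `Y` on the event `X < Y` and the law of `X`
on the event `Y < X` agree up to the weights `d` and `c` attached to `ν` and `μ`. -/
def MaxBalanced (c d : ℝ≥0∞) (μ ν : Measure ℝ) : Prop :=
  ∀ A, MeasurableSet A → d * ∫⁻ t in A, μ (Iio t) ∂ν = c * ∫⁻ t in A, ν (Iio t) ∂μ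

/-- The law of `x ^ p` for `x` uniformly distributed on `[0, 1]`. -/
noncomputable def powLaw (p : ℝ) : Measure ℝ :=
  (volume.restrict (Icc 0 1)).map (· ^ p)

instance isProbabilityMeasure_powLaw (p : ℝ) : IsProbabilityMeasure (powLaw p) :=
  haveI : IsProbabilityMeasure (volume.restrict (Icc (0 : ℝ) 1)) := ⟨by simp⟩
  Measure.isProbabilityMeasure_map (by fun_prop)

lemma powLaw_Iio {p t : ℝ} (hp : 0 < p) (ht : t ∈ Ioo (0 : ℝ) 1) :
    powLaw p (Iio t) = ENNReal.ofReal (t ^ p⁻¹) := by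
  have preimage_inter : (· ^ p) ⁻¹' Iio t ∩ Icc (0 : ℝ) 1 = Ico 0 (t ^ p⁻¹) := by
    ext x
    have root_lt_one := Real.rpow_lt_one ht.1.le ht.2 (inv_pos.2 hp)
    constructor
    · rintro ⟨hxt, hx⟩
      exact ⟨hx.1, (Real.lt_rpow_inv_iff_of_pos hx.1 ht.1.le hp).2 hxt⟩
    · rintro ⟨hx, hxt⟩
      exact ⟨(Real.lt_rpow_inv_iff_of_pos hx ht.1.le hp).1 hxt, hx, (hxt.trans root_lt_one).le⟩
  rw [powLaw, Measure.map_apply (by fun_prop) measurableSet_Iio,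
    Measure.restrict_apply (measurableSet_Iio.preimage (by fun_prop)), preimage_inter,
    Real.volume_Ico, sub_zero]

lemma preimage_rpow_inter_Ioo {p : ℝ} (hp : 0 < p) (A : Set ℝ) :
    (· ^ p) ⁻¹' A ∩ Ioo (0 : ℝ) 1 = (· ^ p⁻¹) '' (A ∩ Ioo 0 1) := by
  ext x
  constructor
  · rintro ⟨hxA, hx⟩
    exact ⟨x ^ p, ⟨hxA, Real.rpow_pos_of_pos hx.1 p, Real.rpow_lt_one hx.1.le hx.2 hp⟩,
      Real.rpow_rpow_inv hx.1.le hp.ne'⟩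
  · rintro ⟨t, ⟨htA, ht⟩, rfl⟩
    exact ⟨by simpa only [mem_preimage, Real.rpow_inv_rpow ht.1.le hp.ne'] using htA,
      Real.rpow_pos_of_pos ht.1 _, Real.rpow_lt_one ht.1.le ht.2 (inv_pos.2 hp)⟩

lemma ofReal_smul_powLaw {p : ℝ} (hp : 0 < p) :
    ENNReal.ofReal p • powLaw p =
      (volume.restrict (Ioo 0 1)).withDensity fun t ↦ ENNReal.ofReal (t ^ (p⁻¹ - 1)) := by
  ext A hA
  have hAI : MeasurableSet (A ∩ Ioo 0 1) := hA.inter measurableSet_Ioo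
  have hderiv : ∀ t ∈ A ∩ Ioo 0 1,
      HasDerivWithinAt (· ^ p⁻¹) (p⁻¹ * t ^ (p⁻¹ - 1)) (A ∩ Ioo 0 1) t := fun t ht ↦
    (Real.hasDerivAt_rpow_const (Or.inl ht.2.1.ne')).hasDerivWithinAt
  have hinj : InjOn (· ^ p⁻¹) (A ∩ Ioo (0 : ℝ) 1) := fun x hx y hy h ↦
    (Real.rpow_left_inj hx.2.1.le hy.2.1.le (inv_pos.2 hp).ne').1 h
  calc
    ENNReal.ofReal p * powLaw p A
        = ENNReal.ofReal p * volume ((· ^ p⁻¹) '' (A ∩ Ioo 0 1)) := by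
      rw [powLaw, Measure.map_apply (by fun_prop) hA, ← restrict_Ioo_eq_restrict_Icc,
        Measure.restrict_apply (hA.preimage (by fun_prop)), preimage_rpow_inter_Ioo hp]
    _ = ENNReal.ofReal p * ∫⁻ t in A ∩ Ioo 0 1, ENNReal.ofReal |p⁻¹ * t ^ (p⁻¹ - 1)| := by
      rw [← setLIntegral_one, lintegral_image_eq_lintegral_abs_deriv_mul hAI hderiv hinj]
      simp only [mul_one]
    _ = ∫⁻ t in A ∩ Ioo 0 1, ENNReal.ofReal (t ^ (p⁻¹ - 1)) := by
      rw [← lintegral_const_mul' _ _ ENNReal.ofReal_ne_top]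
      refine setLIntegral_congr_fun hAI fun t ht ↦ ?_
      have := Real.rpow_pos_of_pos ht.2.1 (p⁻¹ - 1)
      rw [← ENNReal.ofReal_mul hp.le, abs_of_pos (by positivity), mul_inv_cancel_left₀ hp.ne']
    _ = _ := by
      rw [withDensity_apply _ hA, Measure.restrict_restrict hA]

-- The density `t ^ (p⁻¹ + q⁻¹ - 1)` is symmetric in `p` and `q`.
lemma ofReal_mul_setLIntegral_powLaw_Iio {p q : ℝ} (hp : 0 < p) (hq : 0 < q) {A : Set ℝ}
    (hA : MeasurableSet A) :
    ENNReal.ofReal q * ∫⁻ t in A, powLaw p (Iio t) ∂powLaw q =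
      ∫⁻ t in A ∩ Ioo 0 1, ENNReal.ofReal (t ^ (p⁻¹ + q⁻¹ - 1)) := by
  have hmeas : Measurable fun t ↦ powLaw p (Iio t) :=
    (show Monotone fun t ↦ powLaw p (Iio t) from
      fun _ _ h ↦ measure_mono (Iio_subset_Iio h)).measurable
  rw [← smul_eq_mul, ← lintegral_smul_measure, ← Measure.restrict_smul, ofReal_smul_powLaw hq,
    setLIntegral_withDensity_eq_setLIntegral_mul _ (by fun_prop) hmeas hA,
    Measure.restrict_restrict hA]
  refine setLIntegral_congr_fun (hA.inter measurableSet_Ioo) fun t ht ↦ ?_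
  rw [Pi.mul_apply, powLaw_Iio hp ht.2, ← ENNReal.ofReal_mul (Real.rpow_nonneg ht.2.1.le _),
    ← Real.rpow_add ht.2.1]
  ring_nf

lemma maxBalanced_powLaw {p q : ℝ} (hp : 0 < p) (hq : 0 < q) :
    MaxBalanced (ENNReal.ofReal p) (ENNReal.ofReal q) (powLaw p) (powLaw q) := fun A hA ↦ by
  rw [ofReal_mul_setLIntegral_powLaw_Iio hp hq hA, ofReal_mul_setLIntegral_powLaw_Iio hq hp hA,
    add_comm p⁻¹]

end Balance

section Swap

lemma measurableSet_preimage_comp_right {ι κ : Type*} {E : Set (ι → ℝ)} (hE : MeasurableSet E)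
    (f : ι → κ) : MeasurableSet ((· ∘ f) ⁻¹' E : Set (κ → ℝ)) :=
  hE.preimage (measurable_pi_lambda _ fun i ↦ measurable_pi_apply (f i))

variable {ι : Type*} [DecidableEq ι] {E : Set (ι → ℝ)} {i j : ι}

/-- Every point of `E` has its `i`-th coordinate below its `j`-th one, and this is the only
constraint that `E` puts on the `i`-th coordinate. -/
def OnlyBelow (E : Set (ι → ℝ)) (i j : ι) : Prop :=
  ∀ x ∈ E, x i < x j ∧ ∀ t < x j, Function.update x i t ∈ E

/-- The values `t` such that some, equivalently every, `s < t` puts `x` into `E` when its `i`-th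
and `j`-th coordinates are replaced by `s` and `t`, provided that `OnlyBelow E i j`. The witness
`s = t - 1` makes this set visibly measurable. -/
def upperSection (E : Set (ι → ℝ)) (i j : ι) (x : ι → ℝ) : Set ℝ :=
  {t | Function.update (Function.update x j t) i (t - 1) ∈ E}

lemma measurableSet_upperSection (hE : MeasurableSet E) (x : ι → ℝ) :
    MeasurableSet (upperSection E i j x) := by
  have : Measurable fun t : ℝ ↦ Function.update (Function.update x j t) i (t - 1) := by
    fun_prop
  exact this hE

lemma update_update_comp_swap (x : ι → ℝ) (s t : ℝ) :
    Function.update (Function.update x i t) j s ∘ Equiv.swap i j =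
      Function.update (Function.update x j t) i s := by
  ext k
  rcases eq_or_ne k i with rfl | hki
  · simp
  rcases eq_or_ne k j with rfl | hkj
  · simp [hki, hki.symm]
  simp [Equiv.swap_apply_of_ne_of_ne hki hkj, hki, hkj]

lemma OnlyBelow.update_update_mem_iff (h : OnlyBelow E i j) (hij : i ≠ j) (x : ι → ℝ) (s t : ℝ) :
    Function.update (Function.update x j t) i s ∈ E ↔ s < t ∧ t ∈ upperSection E i j x := by
  constructor
  · intro hx
    have hbelow := h _ hx
    simp only [Function.update_self, Function.update_of_ne hij.symm, Function.update_idem] at hbelow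
    exact ⟨hbelow.1, hbelow.2 _ (sub_one_lt t)⟩
  · rintro ⟨hst, ht⟩
    have hbelow := (h _ ht).2 s
    simp only [Function.update_of_ne hij.symm, Function.update_self, Function.update_idem] at hbelow
    exact hbelow hst

lemma OnlyBelow.preimage_swap (h : OnlyBelow E i j) :
    OnlyBelow ((· ∘ Equiv.swap i j) ⁻¹' E) j i := by
  intro x hx
  have hbelow := h _ hx
  simp only [Function.comp_apply, Equiv.swap_apply_left, Equiv.swap_apply_right] at hbelow
  refine ⟨hbelow.1, fun t ht ↦ ?_⟩
  have hupdate : Function.update x j t ∘ Equiv.swap i j =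
      Function.update (x ∘ Equiv.swap i j) i t := by
    rw [Function.update_comp_equiv, Equiv.symm_swap, Equiv.swap_apply_right]
  rw [mem_preimage, hupdate]
  exact hbelow.2 t ht

lemma upperSection_preimage_swap (x : ι → ℝ) :
    upperSection ((· ∘ Equiv.swap i j) ⁻¹' E) j i x = upperSection E i j x := by
  ext t
  simp only [upperSection, mem_ofPred_eq, mem_preimage,
    update_update_comp_swap]

lemma lmarginal_const_mul {μ : ι → Measure ℝ} {f : (ι → ℝ) → ℝ≥0∞} (hf : Measurable f) (c : ℝ≥0∞)
    (S : Finset ι) (x : ι → ℝ) :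
    lmarginal μ S (fun y ↦ c * f y) x = c * lmarginal μ S f x :=
  lintegral_const_mul c (hf.comp measurable_updateFinset)

variable {μ : ι → Measure ℝ} [∀ i, SigmaFinite (μ i)]

lemma OnlyBelow.lmarginal_indicator (h : OnlyBelow E i j) (hij : i ≠ j) (hE : MeasurableSet E)
    (x : ι → ℝ) :
    lmarginal μ {j, i} (E.indicator 1) x =
      ∫⁻ t in upperSection E i j x, μ i (Iio t) ∂μ j := by
  rw [lmarginal_insert _ (measurable_one.indicator hE) (by simpa using hij.symm),
    ← lintegral_indicator (measurableSet_upperSection hE x)]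
  refine lintegral_congr fun t ↦ ?_
  rw [lmarginal_singleton]
  by_cases ht : t ∈ upperSection E i j x
  · have hind : ∀ s, E.indicator (1 : (ι → ℝ) → ℝ≥0∞)
        (Function.update (Function.update x j t) i s) = (Iio t).indicator 1 s := fun s ↦ by
      simp only [indicator, h.update_update_mem_iff hij, ht, and_true, mem_Iio, Pi.one_apply]
    simp only [hind, lintegral_indicator_one measurableSet_Iio, indicator_of_mem ht]
  · simp only [indicator, h.update_update_mem_iff hij, ht, and_false, if_false, lintegral_zero]

lemma OnlyBelow.pi_preimage_swap [Fintype ι] {c d : ℝ≥0∞}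
    (hμ : MaxBalanced c d (μ i) (μ j)) (h : OnlyBelow E i j) (hij : i ≠ j)
    (hE : MeasurableSet E) :
    d * Measure.pi μ E = c * Measure.pi μ ((· ∘ Equiv.swap i j) ⁻¹' E) := by
  have hE' := measurableSet_preimage_comp_right hE (Equiv.swap i j)
  have hm : Measurable (E.indicator (1 : (ι → ℝ) → ℝ≥0∞)) := measurable_one.indicator hE
  have hm' : Measurable (((· ∘ Equiv.swap i j) ⁻¹' E).indicator (1 : (ι → ℝ) → ℝ≥0∞)) :=
    measurable_one.indicator hE'
  rw [← lintegral_indicator_one hE, ← lintegral_indicator_one hE',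
    ← lintegral_const_mul _ hm, ← lintegral_const_mul _ hm']
  refine lintegral_eq_of_lmarginal_eq {j, i} (hm.const_mul _) (hm'.const_mul _) ?_
  funext x
  rw [lmarginal_const_mul hm, lmarginal_const_mul hm', h.lmarginal_indicator hij hE,
    Finset.pair_comm, h.preimage_swap.lmarginal_indicator hij.symm hE',
    upperSection_preimage_swap]
  exact hμ _ (measurableSet_upperSection hE x)

end Swap

section BlockSwap

variable {ι K : Type*} [DecidableEq ι] [DecidableEq K] {owner : ι → K} {s p : K → ι}
  {S : Finset K}

/-- The coordinates `i` are split into blocks `owner i`, with two marked coordinates `s k` and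
`p k` in the block of each `k`; `blockSwap` exchanges the two in the blocks belonging to `S`. -/
def blockSwap (owner : ι → K) (s p : K → ι) (S : Finset K) (i : ι) : ι :=
  if owner i ∈ S then Equiv.swap (s (owner i)) (p (owner i)) i else i

lemma blockSwap_empty : blockSwap owner s p ∅ = id := by
  ext i
  simp [blockSwap]

lemma blockSwap_left (hs : ∀ k, owner (s k) = k) {k : K} (hk : k ∈ S) :
    blockSwap owner s p S (s k) = p k := by
  simp only [blockSwap, hs, hk, if_true, Equiv.swap_apply_left]

lemma blockSwap_right (hp : ∀ k, owner (p k) = k) {k : K} (hk : k ∈ S) :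
    blockSwap owner s p S (p k) = s k := by
  simp only [blockSwap, hp, hk, if_true, Equiv.swap_apply_right]

lemma blockSwap_of_ne {i : ι} (his : i ≠ s (owner i)) (hip : i ≠ p (owner i)) :
    blockSwap owner s p S i = i := by
  rw [blockSwap, Equiv.swap_apply_of_ne_of_ne his hip, ite_self]

lemma owner_blockSwap (hs : ∀ k, owner (s k) = k) (hp : ∀ k, owner (p k) = k) (i : ι) :
    owner (blockSwap owner s p S i) = owner i := by
  unfold blockSwap
  split_ifs
  · rw [Equiv.swap_apply_def]
    split_ifs <;> simp only [hs, hp]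
  · rfl

lemma blockSwap_ne_of_owner_ne (hs : ∀ k, owner (s k) = k) (hp : ∀ k, owner (p k) = k) {i j : ι}
    (hij : owner i ≠ owner j) : blockSwap owner s p S i ≠ j := by
  rintro rfl
  exact hij (owner_blockSwap hs hp i).symm

lemma blockSwap_insert (hs : ∀ k, owner (s k) = k) (hp : ∀ k, owner (p k) = k) {k : K}
    (hk : k ∉ S) :
    blockSwap owner s p (insert k S) = Equiv.swap (s k) (p k) ∘ blockSwap owner s p S := by
  ext i
  by_cases hi : owner i = k
  · subst hi
    simp only [blockSwap, Finset.mem_insert_self, if_true, Function.comp_apply, hk, if_false]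
  · rw [Function.comp_apply,
      Equiv.swap_apply_of_ne_of_ne (blockSwap_ne_of_owner_ne hs hp (by rwa [hs]))
        (blockSwap_ne_of_owner_ne hs hp (by rwa [hp]))]
    simp only [blockSwap, Finset.mem_insert, hi, false_or]

lemma OnlyBelow.preimage_blockSwap {E : Set (ι → ℝ)} {k : K} (h : OnlyBelow E (s k) (p k))
    (hs : ∀ k, owner (s k) = k) (hp : ∀ k, owner (p k) = k) (hk : k ∉ S) :
    OnlyBelow ((· ∘ blockSwap owner s p S) ⁻¹' E) (s k) (p k) := by
  intro x hx
  have fixed : ∀ i, owner i = k → blockSwap owner s p S i = i := by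
    rintro i rfl
    exact if_neg hk
  have hbelow := h _ hx
  simp only [Function.comp_apply, fixed _ (hs k), fixed _ (hp k)] at hbelow
  refine ⟨hbelow.1, fun t ht ↦ ?_⟩
  have hupdate : Function.update x (s k) t ∘ blockSwap owner s p S =
      Function.update (x ∘ blockSwap owner s p S) (s k) t := by
    ext i
    by_cases hi : owner i = k
    · rcases eq_or_ne i (s k) with rfl | hik
      · simp [fixed _ hi]
      · simp [fixed _ hi, hik]
    · have hik : i ≠ s k := fun h ↦ hi (by rw [h, hs])
      have hik' : blockSwap owner s p S i ≠ s k :=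
        blockSwap_ne_of_owner_ne hs hp (by rwa [hs])
      simp [hik, hik']
  rw [mem_preimage, hupdate]
  exact hbelow.2 t ht

theorem prod_mul_pi_preimage_blockSwap [Fintype ι] {μ : ι → Measure ℝ}
    [∀ i, SigmaFinite (μ i)] {c : ι → ℝ≥0∞}
    (hμ : ∀ k, MaxBalanced (c (s k)) (c (p k)) (μ (s k)) (μ (p k)))
    (hs : ∀ k, owner (s k) = k) (hp : ∀ k, owner (p k) = k)
    {E : Set (ι → ℝ)} (hE : MeasurableSet E)
    (hbelow : ∀ k, s k ≠ p k → OnlyBelow E (s k) (p k)) (S : Finset K) :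
    (∏ k ∈ S, c (p k)) * Measure.pi μ E =
      (∏ k ∈ S, c (s k)) * Measure.pi μ ((· ∘ blockSwap owner s p S) ⁻¹' E) := by
  induction S using Finset.induction_on with
  | empty => simp [blockSwap_empty]
  | insert k S hk ih =>
    set F : Set (ι → ℝ) := (· ∘ blockSwap owner s p S) ⁻¹' E
    have hswap : c (p k) * Measure.pi μ F =
        c (s k) * Measure.pi μ ((· ∘ Equiv.swap (s k) (p k)) ⁻¹' F) := by
      rcases eq_or_ne (s k) (p k) with hk' | hk'
      · simp [hk']
      · exact ((hbelow k hk').preimage_blockSwap hs hp hk).pi_preimage_swap (hμ k) hk'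
          (measurableSet_preimage_comp_right hE _)
    have hF : (· ∘ blockSwap owner s p (insert k S)) ⁻¹' E =
        (· ∘ Equiv.swap (s k) (p k)) ⁻¹' F := by
      rw [blockSwap_insert hs hp hk]
      rfl
    rw [Finset.prod_insert hk, Finset.prod_insert hk, hF, mul_assoc, ih, mul_left_comm, hswap]
    ring

end BlockSwap

section Stability

variable {M W : Type*} {a : M ≃ W} {b : W ≃ M}

/-- The scores that men and women give to each other: `inl (m, w)` stands for the score that
`m` gives to `w`, and `inr (m, w)` for the score that `w` gives to `m`. -/
abbrev ScoreIndex (M W : Type*) : Type _ := (M × W) ⊕ (M × W)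

/-- The person who gives a score. -/
def scorer : ScoreIndex M W → M ⊕ W :=
  Sum.map Prod.fst Prod.snd

/-- The couple consisting of the giver and the recipient of a score. -/
def couple : ScoreIndex M W → M × W :=
  Sum.elim id id

/-- The score that each person gives to their successor under the permutation `(a, b)`. As
`(b.symm, a.symm)` encodes the inverse, `succScore b.symm a.symm` is about the predecessors. -/
def succScore (a : M ≃ W) (b : W ≃ M) : M ⊕ W → ScoreIndex M W :=
  Sum.map (fun m ↦ (m, a m)) (fun w ↦ (b w, w))

/-- The scores for which the permutation `(a, b)` is stable, lower scores being preferred. -/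
def stableScores (a : M ≃ W) (b : W ≃ M) : Set (ScoreIndex M W → ℝ) :=
  {u | (∀ k, succScore a b k = succScore b.symm a.symm k ∨
      u (succScore a b k) < u (succScore b.symm a.symm k)) ∧
    ∀ m w, a m ≠ w → b w ≠ m →
      ¬ (u (.inl (m, w)) < u (succScore b.symm a.symm (.inl m)) ∧
        u (.inr (m, w)) < u (succScore b.symm a.symm (.inr w)))}

lemma scorer_succScore (k : M ⊕ W) : scorer (succScore a b k) = k := by
  cases k <;> rfl

lemma inl_ne_succScore {m : M} {w : W} (h : a m ≠ w) (k : M ⊕ W) :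
    .inl (m, w) ≠ succScore a b k := by
  rcases k with m' | w'
  · rintro ⟨⟩
    exact h rfl
  · rintro ⟨⟩

lemma inr_ne_succScore {m : M} {w : W} (h : b w ≠ m) (k : M ⊕ W) :
    .inr (m, w) ≠ succScore a b k := by
  rcases k with m' | w'
  · rintro ⟨⟩
  · rintro ⟨⟩
    exact h rfl

lemma measurableSet_stableScores [Countable M] [Countable W] :
    MeasurableSet (stableScores a b) := by
  unfold stableScores
  measurability

lemma onlyBelow_stableScores [DecidableEq M] [DecidableEq W] (k : M ⊕ W)
    (hk : succScore a b k ≠ succScore b.symm a.symm k) :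
    OnlyBelow (stableScores a b) (succScore a b k) (succScore b.symm a.symm k) := by
  rintro u ⟨hsucc, hblock⟩
  refine ⟨(hsucc k).resolve_left hk, fun t ht ↦ ?_⟩
  have succ_ne {l} (hl : l ≠ k) : succScore a b l ≠ succScore a b k := fun h ↦
    hl (by rw [← scorer_succScore (a := a) (b := b) l, h, scorer_succScore])
  have pred_ne (l) : succScore b.symm a.symm l ≠ succScore a b k := fun h ↦ by
    obtain rfl : l = k := by
      rw [← scorer_succScore (a := b.symm) (b := a.symm) l, h, scorer_succScore]
    exact hk h.symm
  constructor
  · intro l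
    rcases eq_or_ne l k with rfl | hl
    · right
      rwa [Function.update_self, Function.update_of_ne (pred_ne l)]
    · rw [Function.update_of_ne (succ_ne hl), Function.update_of_ne (pred_ne l)]
      exact hsucc l
  · intro m w ham hbw
    rw [Function.update_of_ne (inl_ne_succScore ham k), Function.update_of_ne (pred_ne _),
      Function.update_of_ne (inr_ne_succScore hbw k), Function.update_of_ne (pred_ne _)]
    exact hblock m w ham hbw

lemma symm_apply_ne_iff {α β : Type*} (f : α ≃ β) {x : α} {y : β} : f.symm y ≠ x ↔ f x ≠ y := by
  rw [Ne, Equiv.symm_apply_eq, eq_comm]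

lemma preimage_blockSwap_stableScores [Fintype M] [Fintype W] [DecidableEq M] [DecidableEq W] :
    (· ∘ blockSwap scorer (succScore a b) (succScore b.symm a.symm) Finset.univ) ⁻¹'
      stableScores a b = stableScores b.symm a.symm := by
  ext u
  simp only [stableScores, mem_preimage, mem_ofPred_eq, Equiv.symm_symm, Function.comp_apply,
    blockSwap_left scorer_succScore (Finset.mem_univ _),
    blockSwap_right scorer_succScore (Finset.mem_univ _), symm_apply_ne_iff]
  refine and_congr (forall_congr' fun k ↦ or_congr_left eq_comm) (forall₂_congr fun m w ↦ ?_)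
  rw [forall_comm]
  refine forall₂_congr fun hbw ham ↦ ?_
  have ham' := (symm_apply_ne_iff a).2 ham
  have hbw' := (symm_apply_ne_iff b).2 hbw
  rw [blockSwap_of_ne (inl_ne_succScore ham _) (inl_ne_succScore hbw' _),
    blockSwap_of_ne (inr_ne_succScore hbw _) (inr_ne_succScore ham' _)]

lemma prod_succScore_symm [Fintype M] [Fintype W] (c : M × W → ℝ≥0∞) :
    ∏ k, c (couple (succScore b.symm a.symm k)) = ∏ k, c (couple (succScore a b k)) := by
  simp only [Fintype.prod_sum_type, succScore, couple, Sum.map_inl, Sum.map_inr, Sum.elim_inl,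
    Sum.elim_inr, id]
  rw [mul_comm]
  congr 1
  · exact Fintype.prod_equiv a.symm _ _ fun w ↦ by simp
  · exact Fintype.prod_equiv b.symm _ _ fun m ↦ by simp

theorem pi_stableScores_inv [Fintype M] [Fintype W] {μ : ScoreIndex M W → Measure ℝ}
    [∀ i, SigmaFinite (μ i)] {c : M × W → ℝ≥0∞} (hc₀ : ∀ mw, c mw ≠ 0) (hc : ∀ mw, c mw ≠ ∞)
    (hμ : ∀ i j, MaxBalanced (c (couple i)) (c (couple j)) (μ i) (μ j)) :
    Measure.pi μ (stableScores a b) = Measure.pi μ (stableScores b.symm a.symm) := by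
  classical
  have key := prod_mul_pi_preimage_blockSwap (c := fun i ↦ c (couple i))
    (fun _ ↦ hμ _ _) scorer_succScore scorer_succScore measurableSet_stableScores
    (onlyBelow_stableScores (a := a) (b := b)) Finset.univ
  rw [preimage_blockSwap_stableScores, prod_succScore_symm] at key
  exact (ENNReal.mul_right_inj (Finset.prod_ne_zero_iff.2 fun _ _ ↦ hc₀ _)
    (ENNReal.prod_ne_top fun _ _ ↦ hc _)).1 key

end Stability

section PowerScores

variable {N : ℕ}

/-- The scores `X ^ P` and `Y ^ P` that the profile induced by `(X, Y)` and `P` compares. -/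
noncomputable def powScores (P : Fin N × Fin N → ℝ)
    (XY : (Fin N × Fin N → ℝ) × (Fin N × Fin N → ℝ)) : ScoreIndex (Fin N) (Fin N) → ℝ :=
  Sum.elim (fun mw ↦ XY.1 mw ^ P mw) (fun mw ↦ XY.2 mw ^ P mw)

lemma measurePreserving_powScores (P : Fin N × Fin N → ℝ) :
    MeasurePreserving (powScores P) (unifBox N) (Measure.pi fun i ↦ powLaw (P (couple i))) := by
  have hpow : MeasurePreserving (fun (X : Fin N × Fin N → ℝ) mw ↦ X mw ^ P mw)
      (Measure.pi fun _ ↦ volume.restrict (Icc (0 : ℝ) 1)) (Measure.pi fun mw ↦ powLaw (P mw)) :=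
    measurePreserving_pi (f := fun mw (x : ℝ) ↦ x ^ P mw) _ _ fun mw ↦ ⟨by fun_prop, rfl⟩
  exact (measurePreserving_sumPiEquivProdPi_symm fun i ↦ powLaw (P (couple i))).comp
    (hpow.prod hpow)

lemma powScores_mem_stableScores {P : Fin N × Fin N → ℝ}
    {XY : (Fin N × Fin N → ℝ) × (Fin N × Fin N → ℝ)} {a b : Fin N ≃ Fin N} :
    powScores P XY ∈ stableScores a b ↔ IsStablePerm P XY a b := by
  simp [stableScores, IsStablePerm, powScores, PrefM, PrefW, succScore, and_assoc]

lemma unifBox_isStablePerm (P : Fin N × Fin N → ℝ) (a b : Fin N ≃ Fin N) :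
    unifBox N {XY | IsStablePerm P XY a b} =
      Measure.pi (fun i ↦ powLaw (P (couple i))) (stableScores a b) := by
  simp only [← powScores_mem_stableScores]
  exact (measurePreserving_powScores P).measure_preimage
    measurableSet_stableScores.nullMeasurableSet

end PowerScores

/-- Under the symmetric power preference distribution, a permutation `σ` (encoded by the
pair `(a, b)`) and its inverse `σ⁻¹` (encoded by the pair `(b.symm, a.symm)`) are equally
likely to be stable. -/
theorem prob_stablePerm_inv (N : ℕ) (hN : 1 ≤ N) (P : Fin N × Fin N → ℝ)
    (hP : ∀ mw, 0 < P mw) (a b : Fin N ≃ Fin N) :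
    unifBox N {XY | IsStablePerm P XY a b} =
      unifBox N {XY | IsStablePerm P XY b.symm a.symm} := by
  rw [unifBox_isStablePerm, unifBox_isStablePerm]
  exact pi_stableScores_inv (fun mw ↦ (ENNReal.ofReal_pos.2 (hP mw)).ne')
    (fun _ ↦ ENNReal.ofReal_ne_top) fun _ _ ↦ maxBalanced_powLaw (hP _) (hP _)
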